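/- For every μ ∈ P(E), the filter sequence (π_n^μ)_{n≥0} is a Markov chain with transition kernel Π under Q_μ: for every n ≥ 0 and every bounded continuous function f : P(E) → ℝ, the conditional expectation under Q_μ of f(π_{n+1}^μ) given the σ-algebra generated by the coordinates y_1, …, y_n equals Πf(π_n^μ), Q_μ-almost surely (with π_0^μ = μ). -/

import Mathlib

open MeasureTheory Filter Topology ENNReal

/-- `P(E)`: probability vectors on a countable set `E`, with the topology of
pointwise (equivalently, weak) convergence inherited from `E → ℝ`. -/
abbrev ProbVec (E : Type*) := {p : E → ℝ // (∀ i, 0 ≤ p i) ∧ HasSum p 1}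

/-- Row-vector/matrix product `(p M(y))_j = ∑_i p_i M_{ij}(y)`. -/
noncomputable def rowMul {E F : Type*} (M : F → E → E → ℝ) (p : E → ℝ) (y : F) : E → ℝ :=
  fun j => ∑' i, p i * M y i j

/-- Iterated product `p M(y₁)⋯M(yₙ)` along a list of observations. -/
noncomputable def rowIter {E F : Type*} (M : F → E → E → ℝ) (p : E → ℝ) (ys : List F) : E → ℝ :=
  ys.foldl (rowMul M) p

/-- `p 1 = ∑_j p_j`. -/
noncomputable def rowTot {E : Type*} (p : E → ℝ) : ℝ := ∑' j, p j

/-- One step of the filter: `μ ↦ μM(y)/(μM(y)1)` (junk value `μ` when undefined). -/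
noncomputable def filterStep {E F : Type*} (M : F → E → E → ℝ) (μ : ProbVec E) (y : F) :
    ProbVec E := by
  classical
  exact if h : ∃ ν : ProbVec E, ∀ j,
      (ν : E → ℝ) j * rowTot (rowMul M (μ : E → ℝ) y) = rowMul M (μ : E → ℝ) y j
    then h.choose else μ

/-- The filter `μM(y₁)⋯M(yₙ)/(μM(y₁)⋯M(yₙ)1)` (junk value `μ` when undefined). -/
noncomputable def filterList {E F : Type*} (M : F → E → E → ℝ) (μ : ProbVec E) (ys : List F) :
    ProbVec E := by
  classical
  exact if h : ∃ ν : ProbVec E, ∀ j,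
      (ν : E → ℝ) j * rowTot (rowIter M (μ : E → ℝ) ys) = rowIter M (μ : E → ℝ) ys j
    then h.choose else μ

/-- The filter `π_n^μ(y)` as a function of the observation path `y : ℕ → F`
(the coordinate `y k` represents the observation `y_{k+1}`). -/
noncomputable def filterSeq {E F : Type*} (M : F → E → E → ℝ) (μ : ProbVec E) (y : ℕ → F)
    (n : ℕ) : ProbVec E :=
  filterList M μ (List.ofFn fun k : Fin n => y k)

/-- The filter transition kernel `Π`, acting on functions:
`Πf(μ) = ∫ f(μM(y)/(μM(y)1)) ⬝ (μM(y)1) φ(dy)`. -/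
noncomputable def filterKernel {E F : Type*} [MeasurableSpace F] (M : F → E → E → ℝ)
    (φ : Measure F) (f : ProbVec E → ℝ) (μ : ProbVec E) : ℝ :=
  ∫ y, f (filterStep M μ y) * rowTot (rowMul M (μ : E → ℝ) y) ∂φ

/-- Bounded continuous real functions on `P(E)`. -/
def IsBddCont {E : Type*} (f : ProbVec E → ℝ) : Prop :=
  Continuous f ∧ ∃ C : ℝ, ∀ μ, |f μ| ≤ C

/-- A probability measure `𝕄` on `P(E)` is `Π`-invariant if `∫ Πf d𝕄 = ∫ f d𝕄`
for every bounded continuous `f`. -/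
def IsPiInvariant {E F : Type*} [MeasurableSpace F] (M : F → E → E → ℝ) (φ : Measure F)
    (𝕄 : ProbabilityMeasure (ProbVec E)) : Prop :=
  ∀ f : ProbVec E → ℝ, IsBddCont f →
    ∫ μ, filterKernel M φ f μ ∂(𝕄 : Measure (ProbVec E)) =
      ∫ μ, f μ ∂(𝕄 : Measure (ProbVec E))

/-- The signal transition matrix `P_{ij} = ∫ M_{ij}(y) φ(dy)`. -/
noncomputable def transMat {E F : Type*} [MeasurableSpace F] (M : F → E → E → ℝ)
    (φ : Measure F) : E → E → ℝ :=
  fun i j => ∫ y, M y i j ∂φ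

/-- Powers of a transition matrix on a countable state space. -/
noncomputable def matPow {E : Type*} [DecidableEq E] (P : E → E → ℝ) : ℕ → E → E → ℝ
  | 0 => fun i j => if i = j then 1 else 0
  | n + 1 => fun i j => ∑' k, matPow P n i k * P k j

/-!
Given `y₁, …, yₙ`, the next observation has density `μM(y₁)⋯M(yₙ)M(y)1 / μM(y₁)⋯M(yₙ)1 = πₙM(y)1`,
which depends on the past only through the filter `πₙ`. Since normalization commutes with scalar
multiples, `πₙ₊₁` is one filter step from `πₙ` along `yₙ₊₁`, and integrating `f` of that step
against the conditional law of `yₙ₊₁` is by definition `Πf(πₙ)`. The divisions are harmless because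
a random variable almost surely avoids the zero set of its own density.
-/

open ProbabilityTheory

section Disintegration

variable {Ω α β : Type*} {mΩ : MeasurableSpace Ω} {mα : MeasurableSpace α} {mβ : MeasurableSpace β}
  {P : Measure Ω} {X : Ω → α} {Y : Ω → β}

theorem ae_density_ne_zero_of_hasLaw {ν : Measure α} {w : α → ℝ≥0∞} (hw : Measurable w)
    (hX : HasLaw X (ν.withDensity w) P) : ∀ᵐ ω ∂P, w (X ω) ≠ 0 := by
  rw [hX.ae_iff (p := fun x => w x ≠ 0) (by fun_prop), ae_withDensity_iff hw]
  exact Eventually.of_forall fun _ => id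

theorem hasCondDistrib_of_density_eq_mul {ν : Measure α} [SFinite ν] {φ : Measure β} [SFinite φ]
    {κ : Kernel α β} [IsSFiniteKernel κ] {w : α → ℝ≥0∞} {d : α × β → ℝ≥0∞} {k : α → β → ℝ≥0∞}
    (hw : Measurable w) (hd : Measurable d) (hk : Measurable (Function.uncurry k))
    (hκ : ∀ x, κ x = φ.withDensity (k x)) (hdk : ∀ x y, w x ≠ 0 → d (x, y) = w x * k x y)
    (hX : HasLaw X (ν.withDensity w) P)
    (hXY : HasLaw (fun ω => (X ω, Y ω)) ((ν.prod φ).withDensity d) P) :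
    HasCondDistrib Y X κ P where
  aemeasurable := hXY.aemeasurable
  map_eq := by
    obtain rfl : κ = (Kernel.const α φ).withDensity k :=
      Kernel.ext fun x => by rw [hκ, Kernel.withDensity_apply _ hk, Kernel.const_apply]
    -- `hdk` says nothing where `w` vanishes, but there `d` must vanish too: `X` has density `w`.
    have hd_zero : ∀ᵐ z ∂ν.prod φ, d z ≠ 0 → w z.1 ≠ 0 :=
      (ae_withDensity_iff hd).mp <| (hXY.ae_iff (p := fun z => w z.1 ≠ 0) (by fun_prop)).mp
        (ae_density_ne_zero_of_hasLaw hw hX)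
    have hd_ae : d =ᵐ[ν.prod φ] (fun z => w z.1) * Function.uncurry k := by
      filter_upwards [hd_zero] with z hz
      by_cases hwz : w z.1 = 0
      · simpa [hwz] using hz
      · exact hdk z.1 z.2 hwz
    calc P.map (fun ω => (X ω, Y ω))
        = (ν.prod φ).withDensity ((fun z => w z.1) * Function.uncurry k) := by
          rw [hXY.map_eq, withDensity_congr_ae hd_ae]
      _ = ((ν.withDensity w).prod φ).withDensity (Function.uncurry k) := by
          rw [withDensity_mul _ (by fun_prop) hk, prod_withDensity_left hw]
      _ = P.map X ⊗ₘ (Kernel.const α φ).withDensity k := by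
          rw [hX.map_eq, Measure.compProd_withDensity hk, Measure.compProd_const]
          rfl

theorem condExp_comp_prodMk_ae_eq_integral_of_hasCondDistrib {G : Type*} [NormedAddCommGroup G]
    [NormedSpace ℝ G] [CompleteSpace G] [IsFiniteMeasure P] {κ : Kernel α β} [IsSFiniteKernel κ]
    (hX : Measurable X) (hY : HasCondDistrib Y X κ P) {f : α × β → G}
    (hf : Integrable f (P.map X ⊗ₘ κ)) :
    P[fun ω => f (X ω, Y ω)|mα.comap X] =ᵐ[P] fun ω => ∫ y, f (X ω, y) ∂κ (X ω) := by
  have hf_law : Integrable f (P.map fun ω => (X ω, Y ω)) := by rwa [hY.map_eq]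
  have h_int : Integrable (fun x => ∫ y, f (x, y) ∂κ x) (P.map X) := hf.integral_compProd
  refine (ae_eq_condExp_of_forall_setIntegral_eq hX.comap_le
    (hf_law.comp_aemeasurable hY.aemeasurable)
    (fun _ _ _ => (h_int.comp_measurable hX).integrableOn) ?_ ?_).symm
  · rintro _ ⟨A, hA, rfl⟩ -
    calc ∫ ω in X ⁻¹' A, ∫ y, f (X ω, y) ∂κ (X ω) ∂P
        = ∫ x in A, ∫ y, f (x, y) ∂κ x ∂P.map X :=
          (setIntegral_map hA h_int.1 hX.aemeasurable).symm
      _ = ∫ z in A ×ˢ Set.univ, f z ∂(P.map X ⊗ₘ κ) := by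
          simp only [Measure.setIntegral_compProd hA MeasurableSet.univ hf.integrableOn,
            Measure.restrict_univ]
      _ = ∫ ω in X ⁻¹' A, f (X ω, Y ω) ∂P := by
          rw [← hY.map_eq, setIntegral_map (hA.prod MeasurableSet.univ) hf_law.1 hY.aemeasurable,
            Set.mk_preimage_prod, Set.preimage_univ, Set.inter_univ]
  · exact h_int.1.comp_ae_measurable' hX.aemeasurable

end Disintegration

theorem measurePreserving_withDensity_comp {α β : Type*} {mα : MeasurableSpace α}
    {mβ : MeasurableSpace β} {μ : Measure α} {ν : Measure β} {g : α → β}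
    (hg : MeasurePreserving g μ ν) {d : β → ℝ≥0∞} (hd : Measurable d) :
    MeasurePreserving g (μ.withDensity (d ∘ g)) (ν.withDensity d) where
  measurable := hg.measurable
  map_eq := by
    ext s hs
    rw [Measure.map_apply hg.measurable hs, withDensity_apply _ (hg.measurable hs),
      withDensity_apply _ hs, ← hg.setLIntegral_comp_preimage hs hd]
    rfl

theorem measurePreserving_init_last {n : ℕ} {α : Type*} [MeasurableSpace α]
    (μ : Fin (n + 1) → Measure α) [∀ i, SigmaFinite (μ i)] :
    MeasurePreserving (fun v : Fin (n + 1) → α => (Fin.init v, v (Fin.last n)))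
      (Measure.pi μ) ((Measure.pi fun k => μ k.castSucc).prod (μ (Fin.last n))) := by
  have h := Measure.measurePreserving_swap.comp (measurePreserving_piFinSuccAbove μ (Fin.last n))
  simp only [Fin.succAbove_last] at h
  convert h using 1
  funext v
  simp

theorem measurable_snoc {n : ℕ} {α : Type*} [MeasurableSpace α] :
    Measurable fun z : (Fin n → α) × α => (Fin.snoc z.1 z.2 : Fin (n + 1) → α) :=
  measurable_pi_lambda _ <| Fin.lastCases (by simp only [Fin.snoc_last]; fun_prop)
    fun k => by simp only [Fin.snoc_castSucc]; fun_prop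

theorem measurable_prefix {α : Type*} [MeasurableSpace α] (n : ℕ) :
    Measurable fun (y : ℕ → α) (k : Fin n) => y k :=
  measurable_pi_lambda _ fun _ => measurable_pi_apply _

section RowVectors

variable {E F : Type*} {M : F → E → E → ℝ}

theorem rowTot_smul (c : ℝ) (q : E → ℝ) : rowTot (c • q) = c * rowTot q :=
  tsum_mul_left

theorem rowMul_smul (c : ℝ) (q : E → ℝ) (y : F) : rowMul M (c • q) y = c • rowMul M q y := by
  funext j
  simp only [rowMul, Pi.smul_apply, smul_eq_mul, mul_assoc, tsum_mul_left]

theorem rowTot_nonneg {q : E → ℝ} (hq : 0 ≤ q) : 0 ≤ rowTot q :=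
  tsum_nonneg hq

theorem rowMul_nonneg (hM : ∀ y i j, 0 ≤ M y i j) {q : E → ℝ} (hq : 0 ≤ q) (y : F) :
    0 ≤ rowMul M q y :=
  fun j => tsum_nonneg fun i => mul_nonneg (hq i) (hM y i j)

theorem rowIter_nonneg (hM : ∀ y i j, 0 ≤ M y i j) {q : E → ℝ} (hq : 0 ≤ q) (ys : List F) :
    0 ≤ rowIter M q ys := by
  induction ys generalizing q with
  | nil => exact hq
  | cons y _ ih => exact ih (rowMul_nonneg hM hq y)

theorem rowIter_ofFn_succ (q : E → ℝ) {n : ℕ} (v : Fin (n + 1) → F) :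
    rowIter M q (List.ofFn v) =
      rowMul M (rowIter M q (List.ofFn (Fin.init v))) (v (Fin.last n)) := by
  rw [List.ofFn_succ_last, rowIter, List.foldl_append]
  rfl

theorem hasSum_of_rowTot_ne_zero {q : E → ℝ} (h : rowTot q ≠ 0) : HasSum q (rowTot q) :=
  (not_imp_comm.mp tsum_eq_zero_of_not_summable h).hasSum

variable [Countable E]

@[fun_prop]
theorem measurable_rowTot : Measurable (rowTot : (E → ℝ) → ℝ) :=
  Measurable.tsum measurable_pi_apply

variable [MeasurableSpace F]

theorem measurable_rowMul (hM : ∀ i j, Measurable fun y => M y i j) :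
    Measurable fun z : (E → ℝ) × F => rowMul M z.1 z.2 :=
  measurable_pi_lambda _ fun j => Measurable.tsum fun i => by
    have := hM i j
    fun_prop

theorem measurable_rowIter_ofFn (hM : ∀ i j, Measurable fun y => M y i j) (q : E → ℝ) (n : ℕ) :
    Measurable fun v : Fin n → F => rowIter M q (List.ofFn v) := by
  induction n with
  | zero => simp only [List.ofFn_zero, measurable_const]
  | succ n ih =>
    simp only [rowIter_ofFn_succ]
    have h_init : Measurable (Fin.init : (Fin (n + 1) → F) → Fin n → F) :=
      measurable_pi_lambda _ fun k => measurable_pi_apply k.castSucc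
    exact (measurable_rowMul hM).comp ((ih.comp h_init).prodMk (measurable_pi_apply _))

end RowVectors

section Normalization

variable {E : Type*}

open scoped Classical in
/-- The probability vector proportional to `q`, i.e. `q / (q 1)`. Following the convention of
`filterStep` and `filterList`, the junk value is `μ` when no probability vector `ν` satisfies
`ν * (q 1) = q`, and an arbitrary probability vector (independent of `μ`) when `q = 0`. -/
noncomputable def normalizeOr (μ : ProbVec E) (q : E → ℝ) : ProbVec E :=
  if h : ∃ ν : ProbVec E, ∀ j, (ν : E → ℝ) j * rowTot q = q j then h.choose else μ

theorem coe_normalizeOr_of_rowTot_ne_zero (μ : ProbVec E) {q : E → ℝ} (hq : 0 ≤ q)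
    (h : rowTot q ≠ 0) : (normalizeOr μ q : E → ℝ) = (rowTot q)⁻¹ • q := by
  have h_ex : ∃ ν : ProbVec E, ∀ j, (ν : E → ℝ) j * rowTot q = q j := by
    refine ⟨⟨(rowTot q)⁻¹ • q,
      fun j => mul_nonneg (inv_nonneg.mpr (rowTot_nonneg hq)) (hq j), ?_⟩, fun j => ?_⟩
    · exact inv_mul_cancel₀ h ▸ (hasSum_of_rowTot_ne_zero h).mul_left (rowTot q)⁻¹
    · simp only [Pi.smul_apply, smul_eq_mul]
      field_simp
  rw [normalizeOr, dif_pos h_ex]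
  funext j
  rw [Pi.smul_apply, smul_eq_mul, ← h_ex.choose_spec j, mul_comm, mul_inv_cancel_right₀ h]

theorem normalizeOr_of_rowTot_eq_zero (μ : ProbVec E) {q : E → ℝ} (h : rowTot q = 0)
    (hq : q ≠ 0) : normalizeOr μ q = μ :=
  dif_neg fun ⟨_, hν⟩ => hq <| funext fun j => by rw [← hν j, h, mul_zero, Pi.zero_apply]

theorem normalizeOr_zero_eq (μ ν : ProbVec E) :
    normalizeOr μ (0 : E → ℝ) = normalizeOr ν (0 : E → ℝ) := by
  have h_ex : ∃ ρ : ProbVec E, ∀ j, (ρ : E → ℝ) j * rowTot (0 : E → ℝ) = (0 : E → ℝ) j :=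
    ⟨μ, fun j => by simp [rowTot]⟩
  rw [normalizeOr, normalizeOr, dif_pos h_ex, dif_pos h_ex]

theorem rowTot_smul_normalizeOr (μ : ProbVec E) {q : E → ℝ} (hq : 0 ≤ q) (h : rowTot q ≠ 0) :
    rowTot q • (normalizeOr μ q : E → ℝ) = q := by
  rw [coe_normalizeOr_of_rowTot_ne_zero μ hq h, smul_inv_smul₀ h]

theorem normalizeOr_smul (μ ν : ProbVec E) {q : E → ℝ} (hq : 0 ≤ q) (h : rowTot q ≠ 0) {c : ℝ}
    (hc : 0 < c) : normalizeOr μ (c • q) = normalizeOr ν q := by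
  have h_smul : rowTot (c • q) ≠ 0 := by
    rw [rowTot_smul]
    exact mul_ne_zero hc.ne' h
  apply Subtype.ext
  rw [coe_normalizeOr_of_rowTot_ne_zero μ (smul_nonneg hc.le hq) h_smul,
    coe_normalizeOr_of_rowTot_ne_zero ν hq h, rowTot_smul, smul_smul, mul_inv_rev,
    inv_mul_cancel_right₀ hc.ne']

theorem measurable_normalizeOr [Countable E] {X : Type*} [MeasurableSpace X] {p : X → ProbVec E}
    {q : X → E → ℝ} (hp : Measurable p) (hq : Measurable q) (hq_nonneg : ∀ x, 0 ≤ q x) :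
    Measurable fun x => normalizeOr (p x) (q x) := by
  classical
  -- The choice in `normalizeOr` is forced when `rowTot (q x) ≠ 0` and constant when `q x = 0`.
  have h_coe : ∀ x, (normalizeOr (p x) (q x) : E → ℝ) =
      if rowTot (q x) ≠ 0 then (rowTot (q x))⁻¹ • q x
      else if q x = 0 then (normalizeOr (p x) 0 : E → ℝ) else p x := by
    intro x
    split_ifs with h_tot h_zero
    · exact coe_normalizeOr_of_rowTot_ne_zero _ (hq_nonneg x) h_tot
    · rw [h_zero]
    · rw [normalizeOr_of_rowTot_eq_zero _ (not_not.mp h_tot) h_zero]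
  have h_tot : Measurable fun x => rowTot (q x) := by fun_prop
  suffices Measurable fun x => (normalizeOr (p x) (q x) : E → ℝ) from this.subtype_mk
  simp only [h_coe]
  refine Measurable.ite (h_tot (measurableSet_singleton 0)).compl (h_tot.inv.smul hq) <|
    Measurable.ite (hq (measurableSet_singleton 0)) ?_ hp.subtype_coe
  exact measurable_const' fun x y => by rw [normalizeOr_zero_eq]

end Normalization

section Filter

variable {E F : Type*} {M : F → E → E → ℝ}

theorem filterStep_eq_normalizeOr (μ : ProbVec E) (y : F) :
    filterStep M μ y = normalizeOr μ (rowMul M μ y) :=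
  rfl

theorem filterList_eq_normalizeOr (μ : ProbVec E) (ys : List F) :
    filterList M μ ys = normalizeOr μ (rowIter M μ ys) :=
  rfl

theorem rowTot_rowMul_eq_mul_normalizeOr (μ : ProbVec E) {q : E → ℝ} (hq : 0 ≤ q)
    (h : rowTot q ≠ 0) (y : F) :
    rowTot (rowMul M q y) = rowTot q * rowTot (rowMul M (normalizeOr μ q) y) := by
  rw [← rowTot_smul, ← rowMul_smul, rowTot_smul_normalizeOr μ hq h]

theorem filterStep_normalizeOr (hM : ∀ y i j, 0 ≤ M y i j) (μ ν : ProbVec E) {q : E → ℝ}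
    (hq : 0 ≤ q) {y : F} (h : rowTot q ≠ 0) (h_succ : rowTot (rowMul M q y) ≠ 0) :
    filterStep M (normalizeOr μ q) y = normalizeOr ν (rowMul M q y) := by
  have hc : 0 < (rowTot q)⁻¹ := inv_pos.mpr ((rowTot_nonneg hq).lt_of_ne' h)
  rw [filterStep_eq_normalizeOr, coe_normalizeOr_of_rowTot_ne_zero μ hq h, rowMul_smul,
    normalizeOr_smul _ ν (rowMul_nonneg hM hq y) h_succ hc]

variable [Countable E] [MeasurableSpace F]

theorem measurable_filterStep (hMmeas : ∀ i j, Measurable fun y => M y i j)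
    (hMnn : ∀ y i j, 0 ≤ M y i j) : Measurable fun z : ProbVec E × F => filterStep M z.1 z.2 :=
  measurable_normalizeOr measurable_fst
    ((measurable_rowMul hMmeas).comp (measurable_subtype_coe.prodMap measurable_id))
    fun z => rowMul_nonneg hMnn z.1.2.1 z.2

theorem measurable_filterList_ofFn (hMmeas : ∀ i j, Measurable fun y => M y i j)
    (hMnn : ∀ y i j, 0 ≤ M y i j) (μ : ProbVec E) (n : ℕ) :
    Measurable fun v : Fin n → F => filterList M μ (List.ofFn v) :=
  measurable_normalizeOr measurable_const (measurable_rowIter_ofFn hMmeas μ n)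
    fun v => rowIter_nonneg hMnn μ.2.1 (List.ofFn v)

theorem measurable_filterSeq (hMmeas : ∀ i j, Measurable fun y => M y i j)
    (hMnn : ∀ y i j, 0 ≤ M y i j) (μ : ProbVec E) (n : ℕ) :
    Measurable fun y : ℕ → F => filterSeq M μ y n :=
  (measurable_filterList_ofFn hMmeas hMnn μ n).comp (measurable_prefix n)

end Filter

section ObservationKernel

variable {E F : Type*} [MeasurableSpace F] {M : F → E → E → ℝ} {φ : Measure F}

/-- The law `μM(y)1 φ(dy)` of the next observation when the filter is at `μ`, as a kernel.
`Kernel.withDensity` gives the zero kernel if the density is not jointly measurable. -/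
noncomputable def observationKernel (M : F → E → E → ℝ) (φ : Measure F) [SFinite φ] :
    Kernel (ProbVec E) F :=
  (Kernel.const _ φ).withDensity fun μ y => ENNReal.ofReal (rowTot (rowMul M μ y))

instance [SFinite φ] : IsSFiniteKernel (observationKernel M φ) :=
  Kernel.IsSFiniteKernel.withDensity _ fun _ _ => ofReal_ne_top

theorem measurable_observationDensity [Countable E] (hM : ∀ i j, Measurable fun y => M y i j) :
    Measurable (Function.uncurry fun (μ : ProbVec E) y =>
      ENNReal.ofReal (rowTot (rowMul M μ y))) :=
  (measurable_rowTot.comp ((measurable_rowMul hM).comp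
    (measurable_subtype_coe.prodMap measurable_id))).ennreal_ofReal

theorem observationKernel_apply [Countable E] [SFinite φ]
    (hM : ∀ i j, Measurable fun y => M y i j) (μ : ProbVec E) :
    observationKernel M φ μ =
      φ.withDensity fun y => ENNReal.ofReal (rowTot (rowMul M μ y)) := by
  rw [observationKernel, Kernel.withDensity_apply _ (measurable_observationDensity hM),
    Kernel.const_apply]

theorem integral_observationKernel_filterStep [Countable E] [SFinite φ]
    (hMmeas : ∀ i j, Measurable fun y => M y i j) (hMnn : ∀ y i j, 0 ≤ M y i j)
    (f : ProbVec E → ℝ) (μ : ProbVec E) :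
    ∫ y, f (filterStep M μ y) ∂observationKernel M φ μ = filterKernel M φ f μ := by
  rw [observationKernel_apply hMmeas, filterKernel, integral_withDensity_eq_integral_toReal_smul
    (measurable_observationDensity hMmeas).of_uncurry_left
    (Eventually.of_forall fun _ => ofReal_lt_top)]
  refine integral_congr_ae <| Eventually.of_forall fun y => ?_
  simp only [toReal_ofReal (rowTot_nonneg (rowMul_nonneg hMnn μ.2.1 y)), smul_eq_mul, mul_comm]

end ObservationKernel

section Likelihood

variable {E F : Type*} {M : F → E → E → ℝ} {μ : ProbVec E}

/-- The density `μM(y₁)⋯M(yₙ)1` of the first `n` observations started from `μ`. -/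
noncomputable def likelihood (M : F → E → E → ℝ) (μ : ProbVec E) {n : ℕ} (v : Fin n → F) : ℝ≥0∞ :=
  ENNReal.ofReal (rowTot (rowIter M μ (List.ofFn v)))

theorem rowTot_ne_zero_of_likelihood_ne_zero {n : ℕ} {v : Fin n → F} (h : likelihood M μ v ≠ 0) :
    rowTot (rowIter M μ (List.ofFn v)) ≠ 0 :=
  fun h_zero => h (by rw [likelihood, h_zero, ofReal_zero])

theorem likelihood_snoc (hM : ∀ y i j, 0 ≤ M y i j) {n : ℕ} {v : Fin n → F}
    (h : likelihood M μ v ≠ 0) (y : F) :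
    likelihood M μ (Fin.snoc v y : Fin (n + 1) → F) = likelihood M μ v *
      ENNReal.ofReal (rowTot (rowMul M (filterList M μ (List.ofFn v)) y)) := by
  have h_nonneg := rowIter_nonneg hM μ.2.1 (List.ofFn v)
  rw [likelihood, likelihood, ← ofReal_mul (rowTot_nonneg h_nonneg), rowIter_ofFn_succ,
    Fin.init_snoc, Fin.snoc_last, filterList_eq_normalizeOr,
    rowTot_rowMul_eq_mul_normalizeOr μ h_nonneg (rowTot_ne_zero_of_likelihood_ne_zero h)]

theorem measurable_likelihood [Countable E] [MeasurableSpace F]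
    (hM : ∀ i j, Measurable fun y => M y i j) (μ : ProbVec E) (n : ℕ) :
    Measurable (likelihood M μ : (Fin n → F) → ℝ≥0∞) :=
  (measurable_rowTot.comp (measurable_rowIter_ofFn hM μ n)).ennreal_ofReal

end Likelihood

section ObservationLaw

variable {E F : Type*} [MeasurableSpace F] {M : F → E → E → ℝ} {φ : Measure F} {μ : ProbVec E}
  {Q : Measure (ℕ → F)}

/-- `Q` is the law `Q_μ` of the observation sequence of the hidden Markov model started from `μ`,
described through its finite-dimensional distributions. -/
def IsObservationLaw (M : F → E → E → ℝ) (φ : Measure F) (μ : ProbVec E) (Q : Measure (ℕ → F)) :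
    Prop :=
  ∀ (n : ℕ) (A : Set (Fin n → F)), MeasurableSet A →
    Q {y : ℕ → F | (fun k : Fin n => y k) ∈ A} =
      ∫⁻ v in A, likelihood M μ v ∂(Measure.pi fun _ => φ)

namespace IsObservationLaw

theorem hasLaw_prefix (hQ : IsObservationLaw M φ μ Q) (n : ℕ) :
    HasLaw (fun (y : ℕ → F) (k : Fin n) => y k)
      ((Measure.pi fun _ => φ).withDensity (likelihood M μ)) Q where
  aemeasurable := (measurable_prefix n).aemeasurable
  map_eq := by
    ext A hA
    rw [Measure.map_apply (measurable_prefix n) hA, withDensity_apply _ hA, ← hQ n A hA]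
    rfl

theorem isProbabilityMeasure [SigmaFinite φ] (hQ : IsObservationLaw M φ μ Q) :
    IsProbabilityMeasure Q := by
  have h := hQ 0 Set.univ MeasurableSet.univ
  refine ⟨?_⟩
  simpa [likelihood, rowIter, rowTot, μ.2.2.tsum_eq] using h

variable [Countable E]

theorem ae_likelihood_prefix_ne_zero (hM : ∀ i j, Measurable fun y => M y i j)
    (hQ : IsObservationLaw M φ μ Q) (n : ℕ) :
    ∀ᵐ y ∂Q, likelihood M μ (fun k : Fin n => y k) ≠ 0 :=
  ae_density_ne_zero_of_hasLaw (measurable_likelihood hM μ n) (hQ.hasLaw_prefix n)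

theorem filterSeq_succ_ae_eq_filterStep (hMmeas : ∀ i j, Measurable fun y => M y i j)
    (hMnn : ∀ y i j, 0 ≤ M y i j) (hQ : IsObservationLaw M φ μ Q) (n : ℕ) :
    (fun y => filterSeq M μ y (n + 1)) =ᵐ[Q] fun y => filterStep M (filterSeq M μ y n) (y n) := by
  filter_upwards [hQ.ae_likelihood_prefix_ne_zero hMmeas n,
    hQ.ae_likelihood_prefix_ne_zero hMmeas (n + 1)] with y h h_succ
  have h_tot := rowTot_ne_zero_of_likelihood_ne_zero h
  have h_tot_succ := rowTot_ne_zero_of_likelihood_ne_zero h_succ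
  rw [rowIter_ofFn_succ] at h_tot_succ
  rw [filterSeq, filterSeq, filterList_eq_normalizeOr, filterList_eq_normalizeOr,
    rowIter_ofFn_succ]
  exact (filterStep_normalizeOr hMnn μ μ (rowIter_nonneg hMnn μ.2.1 _) h_tot h_tot_succ).symm

theorem hasLaw_prefix_next [SigmaFinite φ] (hM : ∀ i j, Measurable fun y => M y i j)
    (hQ : IsObservationLaw M φ μ Q) (n : ℕ) :
    HasLaw (fun y : ℕ → F => ((fun k : Fin n => y k : Fin n → F), y n))
      (((Measure.pi fun _ => φ).prod φ).withDensity fun z =>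
        likelihood M μ (Fin.snoc z.1 z.2 : Fin (n + 1) → F)) Q := by
  have hd := (measurable_likelihood hM μ (n + 1)).comp measurable_snoc
  have h := measurePreserving_withDensity_comp
    (measurePreserving_init_last fun _ : Fin (n + 1) => φ) hd
  refine MeasurePreserving.comp_hasLaw (X := fun (y : ℕ → F) (k : Fin (n + 1)) => y k) h ?_
  convert hQ.hasLaw_prefix (n + 1) using 2
  funext v
  simp

theorem hasCondDistrib_next_prefix [SigmaFinite φ] (hMmeas : ∀ i j, Measurable fun y => M y i j)
    (hMnn : ∀ y i j, 0 ≤ M y i j) (hQ : IsObservationLaw M φ μ Q) (n : ℕ) :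
    HasCondDistrib (fun y => y n) (fun (y : ℕ → F) (k : Fin n) => y k)
      ((observationKernel M φ).comap (fun v => filterList M μ (List.ofFn v))
        (measurable_filterList_ofFn hMmeas hMnn μ n)) Q :=
  hasCondDistrib_of_density_eq_mul
    (k := fun v y => ENNReal.ofReal (rowTot (rowMul M (filterList M μ (List.ofFn v)) y)))
    (measurable_likelihood hMmeas μ n)
    ((measurable_likelihood hMmeas μ (n + 1)).comp measurable_snoc)
    ((measurable_observationDensity hMmeas).comp
      ((measurable_filterList_ofFn hMmeas hMnn μ n).prodMap measurable_id))
    (fun v => by rw [Kernel.comap_apply, observationKernel_apply hMmeas])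
    (fun _ y h => likelihood_snoc hMnn h y) (hQ.hasLaw_prefix n) (hQ.hasLaw_prefix_next hMmeas n)

end IsObservationLaw

theorem filter_is_markov_chain_with_kernel_general [Countable E] [SigmaFinite φ]
    (hMmeas : ∀ i j, Measurable fun y => M y i j) (hMnn : ∀ y i j, 0 ≤ M y i j)
    (hQ : IsObservationLaw M φ μ Q) (n : ℕ) {f : ProbVec E → ℝ} (hf : Measurable f)
    (hf_int : Integrable (fun y => f (filterSeq M μ y (n + 1))) Q) :
    Q[fun y => f (filterSeq M μ y (n + 1))|MeasurableSpace.comap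
        (fun y : ℕ → F => fun k : Fin n => y k) MeasurableSpace.pi]
      =ᵐ[Q] fun y => filterKernel M φ f (filterSeq M μ y n) := by
  have := hQ.isProbabilityMeasure
  have h_cond := hQ.hasCondDistrib_next_prefix hMmeas hMnn n
  have h_step : (fun y => f (filterSeq M μ y (n + 1))) =ᵐ[Q]
      fun y => f (filterStep M (filterSeq M μ y n) (y n)) :=
    (hQ.filterSeq_succ_ae_eq_filterStep hMmeas hMnn n).fun_comp f
  have hg : Measurable fun z : (Fin n → F) × F =>
      f (filterStep M (filterList M μ (List.ofFn z.1)) z.2) :=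
    hf.comp <| (measurable_filterStep hMmeas hMnn).comp <|
      (measurable_filterList_ofFn hMmeas hMnn μ n).prodMap measurable_id
  have hg_int := (integrable_map_measure hg.aestronglyMeasurable h_cond.aemeasurable).mpr
    (hf_int.congr h_step)
  rw [h_cond.map_eq] at hg_int
  calc Q[fun y => f (filterSeq M μ y (n + 1))|_]
      =ᵐ[Q] Q[fun y => f (filterStep M (filterSeq M μ y n) (y n))|_] := condExp_congr_ae h_step
    _ =ᵐ[Q] fun y => ∫ z, f (filterStep M (filterSeq M μ y n) z)
          ∂observationKernel M φ (filterSeq M μ y n) :=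
        condExp_comp_prodMk_ae_eq_integral_of_hasCondDistrib (measurable_prefix n) h_cond hg_int
    _ = fun y => filterKernel M φ f (filterSeq M μ y n) :=
        funext fun y => integral_observationKernel_filterStep hMmeas hMnn f (filterSeq M μ y n)

end ObservationLaw

/-- The filter `(π_n^μ)` is a Markov chain with transition kernel `Π` under `Q_μ`:
the conditional expectation of `f(π_{n+1}^μ)` given `σ(y₁,…,y_n)` equals `Πf(π_n^μ)`
`Q_μ`-a.s., for every bounded continuous `f`. -/
theorem filter_is_markov_chain_with_kernel
    {E : Type*} [Countable E] [Nonempty E] [DecidableEq E]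
    {F : Type*} [TopologicalSpace F] [PolishSpace F] [MeasurableSpace F] [BorelSpace F]
    (φ : Measure F) [SigmaFinite φ]
    (M : F → E → E → ℝ)
    (hMmeas : ∀ i j, Measurable fun y => M y i j)
    (hMnn : ∀ y i j, 0 ≤ M y i j)
    (hMbd : ∀ᵐ y ∂φ, ∃ C : ℝ, ∀ (i : E) (s : Finset E), ∑ j ∈ s, M y i j ≤ C)
    (hPtrans : ∀ i, HasSum (fun j => transMat M φ i j) 1)
    (hPirr : ∀ i j : E, ∃ n : ℕ, 0 < matPow (transMat M φ) n i j)
    (lam : ProbVec E)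
    (hlamInv : ∀ j, ∑' i, (lam : E → ℝ) i * transMat M φ i j = (lam : E → ℝ) j)
    (hlamUniq : ∀ ρ : ProbVec E,
      (∀ j, ∑' i, (ρ : E → ℝ) i * transMat M φ i j = (ρ : E → ℝ) j) → ρ = lam)
    (Q : ProbVec E → Measure (ℕ → F))
    (hQprob : ∀ μ, IsProbabilityMeasure (Q μ))
    (hQ : ∀ (μ : ProbVec E) (n : ℕ) (A : Set (Fin n → F)), MeasurableSet A →
      Q μ {y : ℕ → F | (fun k : Fin n => y k) ∈ A} =
        ∫⁻ v in A, ENNReal.ofReal (rowTot (rowIter M (μ : E → ℝ) (List.ofFn v)))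
          ∂(Measure.pi fun _ => φ))
    :
    ∀ (μ : ProbVec E) (n : ℕ) (f : ProbVec E → ℝ), IsBddCont f →
      (Q μ)[(fun y => f (filterSeq M μ y (n + 1)))|MeasurableSpace.comap
          (fun y : ℕ → F => fun k : Fin n => y k) MeasurableSpace.pi]
        =ᵐ[Q μ] fun y => filterKernel M φ f (filterSeq M μ y n) := by
  intro μ n f ⟨hf, C, hC⟩
  have := hQprob μ
  exact filter_is_markov_chain_with_kernel_general hMmeas hMnn (hQ μ) n hf.measurable <|
    .of_bound (hf.measurable.comp (measurable_filterSeq hMmeas hMnn μ (n + 1))).aestronglyMeasurable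
      C (Eventually.of_forall fun _ => hC _)
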